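/- Let L be a 3-dimensional complex ω-Lie algebra with ω not identically zero and with [L,L] = L. Then L is isomorphic to one of: A_α (basis {x,y,z} with [x,y] = x, [x,z] = x+y, [y,z] = z+αx, ω(x,y) = ω(x,z) = 0, ω(y,z) = −1) for some α ∈ ℂ; B (basis {x,y,z} with [x,y] = y, [x,z] = y+z, [y,z] = x, ω(x,y) = ω(x,z) = 0, ω(y,z) = 2); or C_α (basis {x,y,z} with [x,y] = y, [x,z] = αz, [y,z] = x, ω(x,y) = ω(x,z) = 0, ω(y,z) = 1+α) for some nonzero α ∈ ℂ. -/

import Mathlib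

/-- The bracket of the ω-Lie algebra `A_α` on `ℂ³`: bilinear extension of
`[x,y] = x`, `[x,z] = x + y`, `[y,z] = z + α x` on the standard basis
`x = e₀, y = e₁, z = e₂`. -/
def brA (α : ℂ) (u v : Fin 3 → ℂ) : Fin 3 → ℂ :=
  ![(u 0 * v 1 - u 1 * v 0) + (u 0 * v 2 - u 2 * v 0) + α * (u 1 * v 2 - u 2 * v 1),
    u 0 * v 2 - u 2 * v 0, u 1 * v 2 - u 2 * v 1]

/-- The form of `A_α`: bilinear extension of `ω(x,y) = ω(x,z) = 0`, `ω(y,z) = -1`. -/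
def omA (u v : Fin 3 → ℂ) : ℂ := -(u 1 * v 2 - u 2 * v 1)

/-- The bracket of the ω-Lie algebra `B` on `ℂ³`: bilinear extension of
`[x,y] = y`, `[x,z] = y + z`, `[y,z] = x`. -/
def brB (u v : Fin 3 → ℂ) : Fin 3 → ℂ :=
  ![u 1 * v 2 - u 2 * v 1, (u 0 * v 1 - u 1 * v 0) + (u 0 * v 2 - u 2 * v 0),
    u 0 * v 2 - u 2 * v 0]

/-- The form of `B`: bilinear extension of `ω(x,y) = ω(x,z) = 0`, `ω(y,z) = 2`. -/
def omB (u v : Fin 3 → ℂ) : ℂ := 2 * (u 1 * v 2 - u 2 * v 1)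

/-- The bracket of the ω-Lie algebra `C_α` on `ℂ³`: bilinear extension of
`[x,y] = y`, `[x,z] = α z`, `[y,z] = x`. -/
def brC (α : ℂ) (u v : Fin 3 → ℂ) : Fin 3 → ℂ :=
  ![u 1 * v 2 - u 2 * v 1, u 0 * v 1 - u 1 * v 0, α * (u 0 * v 2 - u 2 * v 0)]

/-- The form of `C_α`: bilinear extension of `ω(x,y) = ω(x,z) = 0`, `ω(y,z) = 1 + α`. -/
def omC (α : ℂ) (u v : Fin 3 → ℂ) : ℂ := (1 + α) * (u 1 * v 2 - u 2 * v 1)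

/-- `(L, bracket, ω)` is isomorphic, as an ω-Lie algebra, to the ω-Lie algebra on `ℂ³`
with bracket `br'` and form `ω'`: there is a linear bijection intertwining the brackets
and the bilinear forms. -/
def IsOmegaLieIsoTo {L : Type*} [AddCommGroup L] [Module ℂ L]
    (bracket : L →ₗ[ℂ] L →ₗ[ℂ] L) (ω : L →ₗ[ℂ] L →ₗ[ℂ] ℂ)
    (br' : (Fin 3 → ℂ) → (Fin 3 → ℂ) → (Fin 3 → ℂ))
    (ω' : (Fin 3 → ℂ) → (Fin 3 → ℂ) → ℂ) : Prop :=
  ∃ f : L ≃ₗ[ℂ] (Fin 3 → ℂ),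
    (∀ a b : L, f (bracket a b) = br' (f a) (f b)) ∧
    (∀ a b : L, ω' (f a) (f b) = ω a b)

structure OmDat {L : Type*} [AddCommGroup L] [Module ℂ L]
    (B : L →ₗ[ℂ] L →ₗ[ℂ] L) (ω : L →ₗ[ℂ] L →ₗ[ℂ] ℂ) : Prop where
  anti : ∀ a b : L, B a b = - B b a
  skew : ∀ a b : L, ω a b = - ω b a
  jac : ∀ a b c : L, B (B a b) c + B (B b c) a + B (B c a) b
        = ω a b • c + ω b c • a + ω c a • b
  dim : Module.finrank ℂ L = 3
  der : Submodule.span ℂ (Set.range fun p : L × L => B p.1 p.2) = ⊤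

def I3 {L : Type*} [AddCommGroup L] [Module ℂ L] (x y z : L) : Prop :=
  ∀ a b c : ℂ, a • x + b • y + c • z = 0 → a = 0 ∧ b = 0 ∧ c = 0

section
variable {L : Type*} [AddCommGroup L] [Module ℂ L]
  {B : L →ₗ[ℂ] L →ₗ[ℂ] L} {ω : L →ₗ[ℂ] L →ₗ[ℂ] ℂ}

theorem I3.li {x y z : L} (h : I3 x y z) : LinearIndependent ℂ ![x, y, z] := by
  rw [Fintype.linearIndependent_iff]
  intro g hg
  simp only [Fin.sum_univ_three, Matrix.cons_val] at hg
  obtain ⟨h0, h1, h2⟩ := h _ _ _ hg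
  intro i
  fin_cases i <;> assumption

theorem I3.of_li {x y z : L} (h : LinearIndependent ℂ ![x, y, z]) : I3 x y z := by
  rw [Fintype.linearIndependent_iff] at h
  intro a b c habc
  have := h ![a, b, c] (by simpa [Fin.sum_univ_three] using habc)
  exact ⟨this 0, this 1, this 2⟩

theorem I3.coords {x y z : L} (h : I3 x y z) (hd : Module.finrank ℂ L = 3) :
    ∃ f : L ≃ₗ[ℂ] (Fin 3 → ℂ), (∀ v, v = f v 0 • x + f v 1 • y + f v 2 • z) ∧
      ∀ a b c : ℂ, f (a • x + b • y + c • z) = ![a, b, c] := by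
  let b := basisOfLinearIndependentOfCardEqFinrank h.li (by simp [hd])
  have hb : ⇑b = ![x, y, z] := coe_basisOfLinearIndependentOfCardEqFinrank _ _
  have key : ∀ v, v = b.equivFun v 0 • x + b.equivFun v 1 • y + b.equivFun v 2 • z := by
    intro v
    have := b.sum_equivFun v
    rw [Fin.sum_univ_three, hb] at this
    exact this.symm
  refine ⟨b.equivFun, key, fun a1 b1 c1 => ?_⟩
  have h2 := key (a1 • x + b1 • y + c1 • z)
  set g := b.equivFun (a1 • x + b1 • y + c1 • z)
  obtain ⟨h0, h1, h2⟩ := h (g 0 - a1) (g 1 - b1) (g 2 - c1)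
    (by linear_combination (norm := module) -h2)
  ext i
  fin_cases i
  · simpa [sub_eq_zero] using h0
  · simpa [sub_eq_zero] using h1
  · simpa [sub_eq_zero] using h2

theorem OmDat.self (D : OmDat B ω) (a : L) : B a a = 0 := by
  have h := D.anti a a
  have : (2 : ℂ) • B a a = 0 := by linear_combination (norm := module) h
  simpa using this

theorem OmDat.wself (D : OmDat B ω) (a : L) : ω a a = 0 := by
  have h := D.skew a a
  linear_combination h / 2

theorem OmDat.expand (D : OmDat B ω) (x y z : L) (a b c a' b' c' : ℂ) :
    B (a • x + b • y + c • z) (a' • x + b' • y + c' • z) =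
      (a * b' - b * a') • B x y + (a * c' - c * a') • B x z + (b * c' - c * b') • B y z := by
  simp only [map_add, map_smul, LinearMap.add_apply, LinearMap.smul_apply, D.self,
    D.anti y x, D.anti z x, D.anti z y]
  module

theorem OmDat.wexpand (D : OmDat B ω) (x y z : L) (a b c a' b' c' : ℂ) :
    ω (a • x + b • y + c • z) (a' • x + b' • y + c' • z) =
      (a * b' - b * a') * ω x y + (a * c' - c * a') * ω x z + (b * c' - c * b') * ω y z := by
  simp only [map_add, map_smul, LinearMap.add_apply, LinearMap.smul_apply, D.wself,
    D.skew y x, D.skew z x, D.skew z y, smul_eq_mul]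
  ring

theorem OmDat.indep (D : OmDat B ω) {x y z : L} (h : I3 x y z) :
    I3 (B x y) (B x z) (B y z) := by
  obtain ⟨f, hf, -⟩ := h.coords D.dim
  apply I3.of_li
  apply linearIndependent_of_top_le_span_of_card_eq_finrank
  · rw [← D.der, Submodule.span_le]
    rintro _ ⟨⟨u, v⟩, rfl⟩
    simp only
    rw [hf u, hf v, D.expand]
    refine add_mem (add_mem ?_ ?_) ?_ <;> apply Submodule.smul_mem <;> apply Submodule.subset_span
    · exact ⟨0, rfl⟩
    · exact ⟨1, rfl⟩
    · exact ⟨2, rfl⟩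
  · simp [D.dim]

theorem exists_third (hd : Module.finrank ℂ L = 3) {u v : L}
    (h : ∀ a b : ℂ, a • u + b • v = 0 → a = 0 ∧ b = 0) : ∃ w, I3 w u v := by
  classical
  have hne : Submodule.span ℂ (({u, v} : Finset L) : Set L) ≠ ⊤ := by
    intro ht
    have h1 := finrank_span_finset_le_card (R := ℂ) ({u, v} : Finset L)
    have h2 := Finset.card_le_two (a := u) (b := v)
    rw [Set.finrank, ht, finrank_top, hd] at h1
    omega
  obtain ⟨w, hw⟩ : ∃ w, w ∉ Submodule.span ℂ (({u, v} : Finset L) : Set L) := by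
    by_contra! hc
    exact hne ((Submodule.eq_top_iff').2 hc)
  refine ⟨w, fun a b c habc => ?_⟩
  have ha : a = 0 := by
    by_contra ha
    apply hw
    have : w = (-b / a) • u + (-c / a) • v := by
      apply smul_right_injective L ha
      simp only [smul_add, smul_smul, mul_div_cancel₀ _ ha]
      linear_combination (norm := module) habc
    rw [this]
    refine add_mem ?_ ?_ <;> apply Submodule.smul_mem <;> apply Submodule.subset_span <;> simp
  subst ha
  obtain ⟨h1, h2⟩ := h b c (by simpa using habc)
  exact ⟨rfl, h1, h2⟩

/-- value of `ω y z` from the bracket. -/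
theorem OmDat.jac3 (D : OmDat B ω) {x y z : L} (K : ∀ v, ω x v = 0)
    (p0 p1 p2 q0 q1 q2 r0 r1 r2 : ℂ)
    (hp : B x y = p0 • x + p1 • y + p2 • z)
    (hq : B x z = q0 • x + q1 • y + q2 • z)
    (hr : B y z = r0 • x + r1 • y + r2 • z) :
    (p1 + q2) • B y z + (p0 - r2) • B x z - (r1 + q0) • B x y = ω y z • x := by
  have h := D.jac x y z
  have e1 : B (B x y) z = p0 • B x z + p1 • B y z := by
    rw [hp]; simp [D.self]
  have e2 : B (B y z) x = - r1 • B x y - r2 • B x z := by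
    rw [hr]; simp [D.self, D.anti y x, D.anti z x]; module
  have e3 : B (B z x) y = - q0 • B x y + q2 • B y z := by
    rw [D.anti z x, hq]; simp [D.self, D.anti z y]; module
  rw [e1, e2, e3, D.skew z x, K, K] at h
  linear_combination (norm := module) h

theorem I3.ne {x y z : L} (h : I3 x y z) : x ≠ 0 := by
  rintro rfl
  have := (h 1 0 0 (by simp)).1
  simp at this

theorem OmDat.isoA (D : OmDat B ω) {x y z : L} (h : I3 x y z) (K : ∀ v, ω x v = 0) (α : ℂ)
    (hp : B x y = x) (hq : B x z = x + y) (hr : B y z = z + α • x) :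
    IsOmegaLieIsoTo B ω (brA α) omA := by
  have j := D.jac3 (y := y) (z := z) K 1 0 0 1 1 0 α 0 1 (by rw [hp]; module) (by rw [hq]; module)
    (by rw [hr]; module)
  have hw : ω y z = -1 := by
    rw [hp] at j
    exact smul_left_injective ℂ h.ne (by simp only; rw [← j]; module)
  obtain ⟨f, hf, hf2⟩ := h.coords D.dim
  refine ⟨f, fun a b => ?_, fun a b => ?_⟩
  · conv_lhs => rw [hf a, hf b, D.expand, hp, hq, hr]
    rw [brA, ← hf2]; congr 1; module
  · conv_rhs => rw [hf a, hf b, D.wexpand, K, K, hw]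
    rw [omA]; ring

theorem OmDat.isoB (D : OmDat B ω) {x y z : L} (h : I3 x y z) (K : ∀ v, ω x v = 0)
    (hp : B x y = y) (hq : B x z = y + z) (hr : B y z = x) :
    IsOmegaLieIsoTo B ω brB omB := by
  have j := D.jac3 (y := y) (z := z) K 0 1 0 0 1 1 1 0 0 (by rw [hp]; module) (by rw [hq]; module)
    (by rw [hr]; module)
  have hw : ω y z = 2 := by
    rw [hr] at j
    exact smul_left_injective ℂ h.ne (by simp only; rw [← j]; module)
  obtain ⟨f, hf, hf2⟩ := h.coords D.dim
  refine ⟨f, fun a b => ?_, fun a b => ?_⟩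
  · conv_lhs => rw [hf a, hf b, D.expand, hp, hq, hr]
    rw [brB, ← hf2]; congr 1; module
  · conv_rhs => rw [hf a, hf b, D.wexpand, K, K, hw]
    rw [omB]; ring

theorem OmDat.isoC (D : OmDat B ω) {x y z : L} (h : I3 x y z) (K : ∀ v, ω x v = 0) (α : ℂ)
    (hp : B x y = y) (hq : B x z = α • z) (hr : B y z = x) :
    IsOmegaLieIsoTo B ω (brC α) (omC α) := by
  have j := D.jac3 (y := y) (z := z) K 0 1 0 0 0 α 1 0 0 (by rw [hp]; module) (by rw [hq]; module)
    (by rw [hr]; module)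
  have hw : ω y z = 1 + α := by
    rw [hr] at j
    exact smul_left_injective ℂ h.ne (by simp only; rw [← j]; module)
  obtain ⟨f, hf, hf2⟩ := h.coords D.dim
  refine ⟨f, fun a b => ?_, fun a b => ?_⟩
  · conv_lhs => rw [hf a, hf b, D.expand, hp, hq, hr]
    rw [brC, ← hf2]; congr 1; module
  · conv_rhs => rw [hf a, hf b, D.wexpand, K, K, hw]
    rw [omC]; ring

def Goal3 (B : L →ₗ[ℂ] L →ₗ[ℂ] L) (ω : L →ₗ[ℂ] L →ₗ[ℂ] ℂ) : Prop :=
  (∃ α : ℂ, IsOmegaLieIsoTo B ω (brA α) omA) ∨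
      IsOmegaLieIsoTo B ω brB omB ∨
      (∃ α : ℂ, α ≠ 0 ∧ IsOmegaLieIsoTo B ω (brC α) (omC α))

/-- diagonal case -/
theorem OmDat.diag (D : OmDat B ω) {x y z : L} (h : I3 x y z) (K : ∀ v, ω x v = 0) (l m c : ℂ)
    (hl : l ≠ 0) (hm : m ≠ 0) (hc : c ≠ 0)
    (hp : B x y = l • y) (hq : B x z = m • z) (hr : B y z = c • x) : Goal3 B ω := by
  refine Or.inr (Or.inr ⟨m / l, div_ne_zero hm hl, ?_⟩)
  refine D.isoC (x := l⁻¹ • x) (y := y) (z := (c * l)⁻¹ • z) ?_ ?_ _ ?_ ?_ ?_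
  · intro a b d hh
    obtain ⟨h1, h2, h3⟩ := h (a * l⁻¹) b (d * (c * l)⁻¹) (by rw [← hh]; module)
    refine ⟨?_, h2, ?_⟩
    · simpa [hl] using h1
    · simpa [hl, hc] using h3
  · intro v; simp [K]
  · simp [hp, hl]
  · simp only [map_smul, LinearMap.smul_apply, hq]; module
  · simp only [map_smul, hr, smul_smul]; congr 1; field_simp

/-- triangular case -/
theorem OmDat.tri (D : OmDat B ω) {x y z : L} (h : I3 x y z) (K : ∀ v, ω x v = 0) (l n m c : ℂ)
    (hl : l ≠ 0) (hm : m ≠ 0) (hc : c ≠ 0)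
    (hp : B x y = l • y) (hq : B x z = n • y + m • z) (hr : B y z = c • x) : Goal3 B ω := by
  by_cases hlm : m = l
  · subst hlm
    by_cases hn : n = 0
    · subst hn
      exact D.diag h K m m c hl hm hc hp (by rw [hq]; module) hr
    obtain ⟨t, ht⟩ := IsAlgClosed.exists_eq_mul_self ((n * c)⁻¹)
    have ht0 : t ≠ 0 := by
      rintro rfl
      simp [hn, hc] at ht
    refine Or.inr (Or.inl ?_)
    refine D.isoB (x := m⁻¹ • x) (y := (t * n / m) • y) (z := t • z) ?_ ?_ ?_ ?_ ?_
    · intro a b d hh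
      obtain ⟨h1, h2, h3⟩ := h (a * m⁻¹) (b * (t * n / m)) (d * t) (by rw [← hh]; module)
      refine ⟨?_, ?_, ?_⟩
      · simpa [hm] using h1
      · simpa [hm, ht0, hn] using h2
      · simpa [ht0] using h3
    · intro v; simp [K]
    · simp only [map_smul, LinearMap.smul_apply, hp, smul_smul]; congr 1; field_simp
    · simp only [map_smul, LinearMap.smul_apply, hq, smul_smul, smul_add]
      congr 2 <;> field_simp
    · simp only [map_smul, LinearMap.smul_apply, hr, smul_smul]; congr 1
      have : t * t * (n * c) = 1 := by rw [← ht]; field_simp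
      field_simp
      linear_combination this
  · have hs : m - l ≠ 0 := sub_ne_zero.2 hlm
    refine D.diag (x := x) (y := y) (z := z + (n / (m - l)) • y) ?_ K l m c hl hm hc hp ?_ ?_
    · intro a b d hh
      obtain ⟨h1, h2, h3⟩ := h a (b + d * (n / (m - l))) d (by rw [← hh]; module)
      subst h3
      exact ⟨h1, by simpa using h2, rfl⟩
    · simp only [map_smul, map_add, hp, hq]
      have : n + (n / (m - l)) * l = m * (n / (m - l)) := by field_simp; ring
      linear_combination (norm := module) this • y
    · simp [hr, D.self]

theorem OmDat.block (D : OmDat B ω) {x y z : L} (h : I3 x y z) (K : ∀ v, ω x v = 0)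
    (p1 p2 q1 q2 c : ℂ) (hp : B x y = p1 • y + p2 • z) (hq : B x z = q1 • y + q2 • z)
    (hr : B y z = c • x) : Goal3 B ω := by
  have hi := D.indep h
  have hc : c ≠ 0 := by
    rintro rfl
    have := (hi 0 0 1 (by simp [hr])).2.2
    simp at this
  by_cases hp2 : p2 = 0
  · subst hp2
    have hp1 : p1 ≠ 0 := by
      rintro rfl
      have := (hi 1 0 0 (by simp [hp])).1
      simp at this
    have hq2 : q2 ≠ 0 := by
      rintro rfl
      exact hp1 (by simpa using (hi q1 (-p1) 0 (by rw [hp, hq]; module)).2.1)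
    exact D.tri h K p1 q1 q2 c hp1 hq2 hc (by rw [hp]; module) hq hr
  · have hdet : p1 * q2 - p2 * q1 ≠ 0 := by
      intro hd
      apply hp2
      have := (hi q2 (-p2) 0 (by rw [hp, hq]; linear_combination (norm := module) hd • y)).2.1
      simpa using this
    obtain ⟨s, hs⟩ := IsAlgClosed.exists_eq_mul_self ((p1 + q2) ^ 2 - 4 * (p1 * q2 - p2 * q1))
    obtain ⟨l, hl⟩ : ∃ l, l = (p1 + q2 + s) / 2 := ⟨_, rfl⟩
    have hll : l * (p1 + q2 - l) = p1 * q2 - p2 * q1 := by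
      rw [hl]; linear_combination hs / 4
    have hl0 : l ≠ 0 := by
      intro h0; rw [h0, zero_mul] at hll; exact hdet hll.symm
    have hm0 : p1 + q2 - l ≠ 0 := by
      intro h0; rw [h0, mul_zero] at hll; exact hdet hll.symm
    refine D.tri (x := x) (y := (l - q2) • y + p2 • z) (z := y) ?_ K l 1 (p1 + q2 - l) (- p2 * c)
      hl0 hm0 (by simp [hp2, hc]) ?_ ?_ ?_
    · intro a b d hh
      obtain ⟨h1, h2, h3⟩ := h a (b * (l - q2) + d) (b * p2) (by rw [← hh]; module)
      have hb : b = 0 := by simpa [hp2] using h3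
      subst hb
      exact ⟨h1, rfl, by simpa using h2⟩
    · simp only [map_smul, map_add, hp, hq]
      linear_combination (norm := module) hll • y
    · rw [hp]; module
    · simp only [map_smul, map_add, LinearMap.add_apply, LinearMap.smul_apply, D.self,
        D.anti z y, hr]; module

theorem OmDat.case1 (D : OmDat B ω) {x y z : L} (h : I3 x y z) (K : ∀ v, ω x v = 0)
    (p0 p1 p2 q0 q1 q2 r0 r1 r2 : ℂ)
    (hp : B x y = p0 • x + p1 • y + p2 • z)
    (hq : B x z = q0 • x + q1 • y + q2 • z)
    (hr : B y z = r0 • x + r1 • y + r2 • z) (ht : p1 + q2 ≠ 0) : Goal3 B ω := by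
  have j := D.jac3 K _ _ _ _ _ _ _ _ _ hp hq hr
  obtain ⟨s, hs⟩ : ∃ s, s = (p0 - r2) / (p1 + q2) := ⟨_, rfl⟩
  obtain ⟨t, ht'⟩ : ∃ t, t = (r1 + q0) / (p1 + q2) := ⟨_, rfl⟩
  have hs : s * (p1 + q2) = p0 - r2 := by rw [hs]; field_simp
  have ht' : t * (p1 + q2) = r1 + q0 := by rw [ht']; field_simp
  have h' : I3 x (y + s • x) (z + t • x) := by
    intro a b d hh
    obtain ⟨h1, h2, h3⟩ := h (a + b * s + d * t) b d (by rw [← hh]; module)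
    subst h2 h3
    exact ⟨by simpa using h1, rfl, rfl⟩
  have hp' : B x (y + s • x) = (p0 - p1 * s - p2 * t) • x + p1 • (y + s • x) + p2 • (z + t • x) := by
    simp only [map_smul, map_add, D.self, hp]; module
  have hq' : B x (z + t • x) = (q0 - q1 * s - q2 * t) • x + q1 • (y + s • x) + q2 • (z + t • x) := by
    simp only [map_smul, map_add, D.self, hq]; module
  have hr' : B (y + s • x) (z + t • x) = (ω y z / (p1 + q2)) • x := by
    apply smul_right_injective L ht
    simp only [smul_smul, mul_div_cancel₀ _ ht, ← j]
    simp only [map_smul, map_add, LinearMap.add_apply, LinearMap.smul_apply, D.self, D.anti y x]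
    linear_combination (norm := module) hs • B x z - ht' • B x y
  have j' := D.jac3 K _ _ _ _ _ _ (ω y z / (p1 + q2)) 0 0 hp' hq' (by rw [hr']; module)
  have hw : ω (y + s • x) (z + t • x) = ω y z := by
    simp [K, D.skew y x]
  have hi := D.indep h' (-(q0 - q1 * s - q2 * t)) (p0 - p1 * s - p2 * t) 0 (by
    rw [hr', hw, smul_smul, mul_div_cancel₀ _ ht] at j'
    linear_combination (norm := module) j')
  obtain ⟨i1, i2, -⟩ := hi
  rw [neg_eq_zero] at i1
  rw [i2] at hp'
  rw [i1] at hq'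
  exact D.block h' K p1 p2 q1 q2 _ (by rw [hp']; module) (by rw [hq']; module) hr'

theorem OmDat.case2 (D : OmDat B ω) {x y z : L} (h : I3 x y z) (K : ∀ v, ω x v = 0)
    (q0 q1 r0 r1 r2 : ℂ) (hw : ω y z ≠ 0)
    (hp : B x y = x)
    (hq : B x z = q0 • x + q1 • y)
    (hr : B y z = r0 • x + r1 • y + r2 • z) : Goal3 B ω := by
  have j := D.jac3 (y := y) (z := z) K 1 0 0 q0 q1 0 r0 r1 r2 (by rw [hp]; module) (by rw [hq]; module) hr
  have hq1 : q1 ≠ 0 := by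
    rintro rfl
    have := (D.indep h (-q0) 1 0 (by rw [hp, hq]; module)).2.1
    simp at this
  rw [hp, hq] at j
  obtain ⟨j1, j2, -⟩ := h ((1 - r2) * q0 - (r1 + q0) - ω y z) ((1 - r2) * q1) 0
    (by linear_combination (norm := module) j)
  have hr2 : r2 = 1 := by
    have : 1 - r2 = 0 := by simpa [hq1] using j2
    linear_combination -this
  subst hr2
  have hs : r1 + q0 ≠ 0 := by
    intro h0; rw [h0] at j1; apply hw; linear_combination -j1
  obtain ⟨s, hs'⟩ : ∃ s, s = r1 + q0 := ⟨_, rfl⟩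
  rw [← hs'] at hs
  have hr1 : r1 = s - q0 := by rw [hs']; ring
  subst hr1
  refine Or.inl ⟨r0 * q1 / s ^ 2, ?_⟩
  refine D.isoA (x := (s / q1) • x) (y := y) (z := s⁻¹ • (z + (s - q0) • y)) ?_ ?_ _ ?_ ?_ ?_
  · intro a b d hh
    obtain ⟨h1, h2, h3⟩ := h (a * (s / q1)) (b + d * s⁻¹ * (s - q0)) (d * s⁻¹)
      (by rw [← hh]; module)
    have hd : d = 0 := by simpa [hs] using h3
    subst hd
    exact ⟨by simpa [hs, hq1] using h1, by simpa using h2, rfl⟩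
  · intro v; simp [K]
  · simp [hp]
  · simp only [map_smul, map_add, LinearMap.smul_apply, hp, hq]
    match_scalars <;> field_simp
    ring
  · simp only [map_smul, map_add, D.self, hr]
    match_scalars <;> field_simp

theorem OmDat.main (D : OmDat B ω) (hω : ¬ ∀ a b : L, ω a b = 0) : Goal3 B ω := by
  push Not at hω
  obtain ⟨u, v, huv⟩ := hω
  have hind : ∀ a b : ℂ, a • u + b • v = 0 → a = 0 ∧ b = 0 := by
    intro a b hab
    have h1 := congrArg (fun t => ω t v) hab
    have h2 := congrArg (fun t => ω u t) hab
    simp [D.wself, huv] at h1 h2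
    exact ⟨h1, h2⟩
  obtain ⟨w, hw⟩ := exists_third D.dim hind
  obtain ⟨x, hx⟩ : ∃ x, x = w - (ω w v / ω u v) • u + (ω w u / ω u v) • v := ⟨_, rfl⟩
  have h : I3 x u v := by
    intro a b c hh
    rw [hx] at hh
    obtain ⟨h1, h2, h3⟩ := hw a (b - a * (ω w v / ω u v)) (c + a * (ω w u / ω u v))
      (by rw [← hh]; module)
    subst h1
    exact ⟨rfl, by simpa using h2, by simpa using h3⟩
  have hxu : ω x u = 0 := by
    rw [hx]; simp [D.wself, D.skew v u]; field_simp; ring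
  have hxv : ω x v = 0 := by
    rw [hx]; simp [D.wself]; field_simp; ring
  have K : ∀ t, ω x t = 0 := by
    intro t
    obtain ⟨f, hf, -⟩ := h.coords D.dim
    rw [hf t]; simp [hxu, hxv, D.wself]
  obtain ⟨f, hf, -⟩ := h.coords D.dim
  have j := D.jac3 K _ _ _ _ _ _ _ _ _ (hf (B x u)) (hf (B x v)) (hf (B u v))
  by_cases ht : f (B x u) 1 + f (B x v) 2 = 0
  swap
  · exact D.case1 h K _ _ _ _ _ _ _ _ _ (hf (B x u)) (hf (B x v)) (hf (B u v)) ht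
  rw [ht] at j
  obtain ⟨y, hy⟩ : ∃ y, B x y = x := by
    refine ⟨(ω u v)⁻¹ • ((f (B x u) 0 - f (B u v) 2) • v - (f (B u v) 1 + f (B x v) 0) • u), ?_⟩
    apply smul_right_injective L huv
    simp only [map_smul, map_sub, smul_smul, mul_inv_cancel₀ huv]
    linear_combination (norm := module) j
  have hxy : ∀ a b : ℂ, a • x + b • y = 0 → a = 0 ∧ b = 0 := by
    intro a b hab
    have h1 := congrArg (fun t => B x t) hab
    have hb : b = 0 := by simpa [D.self, hy, h.ne] using h1
    subst hb
    exact ⟨by simpa [h.ne] using hab, rfl⟩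
  obtain ⟨z, hz⟩ := exists_third D.dim hxy
  have h' : I3 x y z := by
    intro a b c hh
    obtain ⟨h1, h2, h3⟩ := hz c a b (by rw [← hh]; module)
    exact ⟨h2, h3, h1⟩
  obtain ⟨g, hg, -⟩ := h'.coords D.dim
  have hyz : ω y z ≠ 0 := by
    intro h0
    apply huv
    rw [hg u, hg v, D.wexpand, K, K, h0]; ring
  by_cases ht' : g (B x z) 2 = 0
  · refine D.case2 h' K (g (B x z) 0) (g (B x z) 1) _ _ _ hyz hy ?_ (hg (B y z))
    have := hg (B x z)
    rw [ht'] at this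
    rw [zero_smul, add_zero] at this
    exact this
  · exact D.case1 h' K 1 0 0 _ _ _ _ _ _ (by rw [hy]; module) (hg (B x z)) (hg (B y z))
      (by simpa using ht')

end

/-- A 3-dimensional complex ω-Lie algebra with `ω` not identically zero and with
`[L,L] = L` is isomorphic to some `A_α` (`α ∈ ℂ`), to `B`, or to some `C_α`
(`0 ≠ α ∈ ℂ`). -/
theorem omega_lie_rank_three_classification
    {L : Type*} [AddCommGroup L] [Module ℂ L] [FiniteDimensional ℂ L]
    (bracket : L →ₗ[ℂ] L →ₗ[ℂ] L) (ω : L →ₗ[ℂ] L →ₗ[ℂ] ℂ)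
    (hanti : ∀ a b : L, bracket a b = - bracket b a)
    (hskew : ∀ a b : L, ω a b = - ω b a)
    (hjac : ∀ a b c : L,
      bracket (bracket a b) c + bracket (bracket b c) a + bracket (bracket c a) b
        = ω a b • c + ω b c • a + ω c a • b)
    (hdim : Module.finrank ℂ L = 3)
    (hω : ¬ ∀ a b : L, ω a b = 0)
    (hderived : Submodule.span ℂ (Set.range fun p : L × L => bracket p.1 p.2) = ⊤) :
    (∃ α : ℂ, IsOmegaLieIsoTo bracket ω (brA α) omA) ∨
      IsOmegaLieIsoTo bracket ω brB omB ∨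
      (∃ α : ℂ, α ≠ 0 ∧ IsOmegaLieIsoTo bracket ω (brC α) (omC α)) := by
  exact OmDat.main ⟨hanti, hskew, hjac, hdim, hderived⟩ hω
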